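/- Let (X, d) be a metric space and let μ be a continuous, locally convex median on X. For each wall W = {H⁺(W), H⁻(W)} in X, the subset L(W) = closure(H⁺(W)) ∩ closure(H⁻(W)) is a convex subset of X closed under μ (a median subalgebra); moreover, if μ has rank at most r, then L(W) with the restricted median has rank at most r − 1. -/

import Mathlib

/-- A median on a set `X` (the median algebra axioms). -/
def IsMedianAlgebra {X : Type*} (m : X → X → X → X) : Prop :=
  (∀ a b c, m a b c = m b a c) ∧
  (∀ a b c, m a b c = m b c a) ∧
  (∀ a b, m a a b = a) ∧
  (∀ a b c d e, m a b (m c d e) = m (m a b c) (m a b d) e)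
/-- The interval `I(a, b) = {c | μ(a,b,c) = c}`. -/
def mInterval {X : Type*} (m : X → X → X → X) (a b : X) : Set X := {c | m a b c = c}
/-- A subset `C` is convex if `I(a,b) ⊆ C` for all `a, b ∈ C`. -/
def MConvex {X : Type*} (m : X → X → X → X) (C : Set X) : Prop :=
  ∀ a ∈ C, ∀ b ∈ C, mInterval m a b ⊆ C
/-- A wall: a pair of non-empty convex disjoint subsets covering `X`. -/
def IsWall {X : Type*} (m : X → X → X → X) (Hp Hm : Set X) : Prop :=
  Hp.Nonempty ∧ Hm.Nonempty ∧ MConvex m Hp ∧ MConvex m Hm ∧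
  Disjoint Hp Hm ∧ Hp ∪ Hm = Set.univ
/-- The coordinatewise median on the cube `{0,1}ⁿ`. -/
def bmed {n : ℕ} (x y z : Fin n → Bool) : Fin n → Bool :=
  fun i => (x i && y i) || (y i && z i) || (x i && z i)

/-!
Take an `n`-cube `f` in the boundary `closure Hp ∩ closure Hm`, and approximate each of its vertices
both from `Hp` and from `Hm`. Let `a ∈ Hm` approximate the bottom vertex and `b ∈ Hp` the top one.
The interval between `a` and `b` is a distributive lattice with `x ⊓ y = m a x y` and
`x ⊔ y = m b x y`. Project to it a point of `Hp` near the bottom vertex and, for each of the `n`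
atoms of `f`, a point of `Hm` near it. These `n + 1` elements `w i` are pairwise disjoint in the
limit. Before the limit, the join `c` of all `w i ⊓ w j` with `i ≠ j` is still close to the bottom
vertex, and the elements `c ⊔ w i` are the atoms of a Boolean cube with bottom `c`. None of them
equals `c`: for `n` of the indices `c ⊔ w i` is close to an atom of `f`, and for the remaining one
it lies in `Hp`, whereas `c` lies in `Hm`. Hence an `n`-cube in the boundary yields an
`(n + 1)`-cube in `X`.

To separate the limit from the algebra, the cube is constructed in the median algebra of continuous
maps to `X` from the space of all approximations, and then evaluated near the limit point.
-/

section LatticeCube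

variable {α β ι : Type*} [DistribLattice α] [DistribLattice β]

/-- The median operation of a distributive lattice. -/
def latticeMedian (x y z : α) : α := x ⊓ y ⊔ y ⊓ z ⊔ x ⊓ z

lemma inf_sup_le_latticeMedian (x y z : α) :
    (x ⊔ y) ⊓ (y ⊔ z) ⊓ (x ⊔ z) ≤ latticeMedian x y z :=
  calc (x ⊔ y) ⊓ (y ⊔ z) ⊓ (x ⊔ z)
      = (y ⊔ x ⊓ z) ⊓ (x ⊔ z) := by rw [sup_comm x y, ← sup_inf_left]
    _ = y ⊓ x ⊔ y ⊓ z ⊔ x ⊓ z ⊓ (x ⊔ z) := by rw [inf_sup_right, inf_sup_left]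
    _ ≤ latticeMedian x y z := by
      rw [inf_comm y x]
      exact sup_le_sup_left inf_le_left _

lemma map_latticeMedian (φ : LatticeHom α β) (x y z : α) :
    φ (latticeMedian x y z) = latticeMedian (φ x) (φ y) (φ z) := by
  simp only [latticeMedian, map_sup, map_inf]

variable [OrderBot α] [Fintype ι]

/-- The join of all pairwise meets of a finite family: the least element modulo which the family
becomes pairwise disjoint. -/
def pairwiseOverlap (w : ι → α) : α := Finset.univ.offDiag.sup fun p => w p.1 ⊓ w p.2

lemma inf_le_pairwiseOverlap (w : ι → α) {i j : ι} (hij : i ≠ j) :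
    w i ⊓ w j ≤ pairwiseOverlap w :=
  Finset.le_sup (f := fun p : ι × ι => w p.1 ⊓ w p.2) (b := (i, j)) (by simpa using hij)

/-- The lattice homomorphism from the cube `ι → Bool` with bottom vertex `pairwiseOverlap w`
and atoms `pairwiseOverlap w ⊔ w i`; the cube it spans may be degenerate. -/
def overlapCube (w : ι → α) : LatticeHom (ι → Bool) α where
  toFun x := pairwiseOverlap w ⊔ Finset.sup {i | x i = true} w
  map_sup' x y := by
    classical
    have support_sup : ({i | (x ⊔ y) i = true} : Finset ι)
        = ({i | x i = true} : Finset ι) ∪ ({i | y i = true} : Finset ι) := by ext; simp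
    rw [support_sup, Finset.sup_union, sup_sup_distrib_left]
  map_inf' x y := by
    rw [← sup_inf_left, Finset.sup_inf_sup]
    apply le_antisymm <;> refine sup_le le_sup_left (Finset.sup_le fun i hi => ?_)
    · refine le_sup_of_le_right (Finset.le_sup_of_le (b := (i, i)) ?_ (le_inf le_rfl le_rfl))
      simpa using hi
    · obtain ⟨i, j⟩ := i
      obtain rfl | hij := eq_or_ne i j
      · exact le_sup_of_le_right (Finset.le_sup_of_le (by simpa using hi) inf_le_left)
      · exact le_sup_of_le_left (inf_le_pairwiseOverlap w hij)

/-- The vertex of the cube `ι → Bool` adjacent to the bottom vertex `⊥` in direction `i`. -/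
def cubeAtom [DecidableEq ι] (i : ι) : ι → Bool := fun j => decide (j = i)

lemma overlapCube_bot (w : ι → α) : overlapCube w ⊥ = pairwiseOverlap w := by
  simp [overlapCube]

lemma overlapCube_atom [DecidableEq ι] (w : ι → α) (i : ι) :
    overlapCube w (cubeAtom i) = pairwiseOverlap w ⊔ w i := by
  simp [overlapCube, cubeAtom, Finset.filter_eq']

end LatticeCube

section Cube

variable {ι : Type*} {n : ℕ}

lemma bmed_eq_latticeMedian (x y z : Fin n → Bool) : bmed x y z = latticeMedian x y z := rfl

lemma bmed_bot_top (x : Fin n → Bool) : bmed ⊥ ⊤ x = x := by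
  simp [bmed_eq_latticeMedian, latticeMedian]

lemma bmed_bot_eq_inf (x y : Fin n → Bool) : bmed ⊥ x y = x ⊓ y := by
  simp [bmed_eq_latticeMedian, latticeMedian]

lemma cubeAtom_ne_bot [DecidableEq ι] (i : ι) : cubeAtom i ≠ ⊥ := fun h => by
  simpa [cubeAtom] using congrFun h i

lemma cubeAtom_inf [DecidableEq ι] (i : ι) (x : ι → Bool) :
    cubeAtom i ⊓ x = if x i = true then cubeAtom i else ⊥ := by
  ext j
  by_cases hx : x i = true <;> by_cases hj : j = i <;> simp_all [cubeAtom]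

lemma disjoint_cubeAtom [DecidableEq ι] {i j : ι} (hij : i ≠ j) :
    Disjoint (cubeAtom i) (cubeAtom j) :=
  disjoint_iff.2 <| (cubeAtom_inf i _).trans <| if_neg <| by simpa [cubeAtom] using hij

lemma pairwise_disjoint_cons_bot_cubeAtom :
    Pairwise (Function.onFun Disjoint (Fin.cons ⊥ cubeAtom : Fin (n + 1) → Fin n → Bool)) := by
  intro i j hij
  cases i using Fin.cases with
  | zero => exact disjoint_bot_left
  | succ i =>
    cases j using Fin.cases with
    | zero => exact disjoint_bot_right
    | succ j => exact disjoint_cubeAtom fun h => hij (congrArg _ h)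

end Cube

/-- Median homomorphisms from the cube `{0,1}ⁿ` to `(X, m)`, injective or not. -/
def IsCubeHom {X : Type*} (m : X → X → X → X) {n : ℕ} (f : (Fin n → Bool) → X) : Prop :=
  ∀ x y z, f (bmed x y z) = m (f x) (f y) (f z)

lemma IsCubeHom.injective {X : Type*} {m : X → X → X → X} {n : ℕ} {f : (Fin n → Bool) → X}
    (hf : IsCubeHom m f) (hatom : ∀ i, f (cubeAtom i) ≠ f ⊥) : Function.Injective f := by
  have project (x : Fin n → Bool) (i : Fin n) :
      m (f ⊥) (f (cubeAtom i)) (f x) = if x i = true then f (cubeAtom i) else f ⊥ := by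
    rw [← hf, bmed_bot_eq_inf, cubeAtom_inf, apply_ite f]
  intro x y hxy
  ext i
  have h := project x i
  rw [hxy, project y i] at h
  cases hx : x i <;> cases hy : y i <;> simp_all [(hatom i).symm]

lemma MConvex.inter {X : Type*} {m : X → X → X → X} {C D : Set X} (hC : MConvex m C)
    (hD : MConvex m D) : MConvex m (C ∩ D) :=
  fun a ha b hb _ hc => ⟨hC a ha.1 b hb.1 hc, hD a ha.2 b hb.2 hc⟩

namespace IsMedianAlgebra

variable {X : Type*} {m : X → X → X → X}

lemma swap_left (h : IsMedianAlgebra m) (a b c : X) : m a b c = m b a c := h.1 a b c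

lemma rotate (h : IsMedianAlgebra m) (a b c : X) : m a b c = m b c a := h.2.1 a b c

lemma swap_right (h : IsMedianAlgebra m) (a b c : X) : m a b c = m a c b := by
  rw [h.swap_left a b c, h.rotate b a c]

lemma med_self_left (h : IsMedianAlgebra m) (a b : X) : m a a b = a := h.2.2.1 a b

lemma med_self_outer (h : IsMedianAlgebra m) (a b : X) : m a b a = a := by
  rw [h.swap_right, h.med_self_left]

lemma med_self_right (h : IsMedianAlgebra m) (a b : X) : m a b b = b := by
  rw [h.rotate, h.med_self_left]

lemma med_med (h : IsMedianAlgebra m) (a b c d e : X) :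
    m a b (m c d e) = m (m a b c) (m a b d) e := h.2.2.2 a b c d e

lemma med_assoc (h : IsMedianAlgebra m) (a x y z : X) : m a (m a x y) z = m a x (m a y z) := by
  rw [h.med_med a x a y z, h.med_self_outer]

lemma med_idem (h : IsMedianAlgebra m) (a b x : X) : m a b (m a b x) = m a b x := by
  rw [h.med_med, h.med_self_outer, h.med_self_right]

lemma med_distrib (h : IsMedianAlgebra m) (a b c d e : X) :
    m a b (m c d e) = m (m a b c) (m a b d) (m a b e) :=
  calc m a b (m c d e)
      = m a b (m (m a b c) e (m a b d)) := by
        rw [← h.med_idem a b (m c d e), h.med_med a b c d e, h.swap_right _ _ e]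
    _ = m (m a b c) (m a b d) (m a b e) := by rw [h.med_med, h.med_idem, h.swap_right]

lemma med_mem_interval (h : IsMedianAlgebra m) {a b x y z : X} (hx : x ∈ mInterval m a b)
    (hy : y ∈ mInterval m a b) (hz : z ∈ mInterval m a b) : m x y z ∈ mInterval m a b := by
  change m a b (m x y z) = m x y z
  rw [h.med_distrib, hx, hy, hz]

lemma med_mem_of_mem (h : IsMedianAlgebra m) {C : Set X} (hC : MConvex m C) {x y : X}
    (hx : x ∈ C) (hy : y ∈ C) (z : X) : m x y z ∈ C :=
  hC x hx y hy (h.med_idem x y z)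

lemma med_mem_of_mem_outer (h : IsMedianAlgebra m) {C : Set X} (hC : MConvex m C) {x z : X}
    (hx : x ∈ C) (hz : z ∈ C) (y : X) : m x y z ∈ C :=
  h.swap_right x z y ▸ h.med_mem_of_mem hC hx hz y

lemma mConvex_singleton (h : IsMedianAlgebra m) (p : X) : MConvex m {p} := by
  rintro _ rfl _ rfl c hc
  exact hc.symm.trans (h.med_self_left _ c)

/-- The interval between `a` and `b` as a type, for its lattice structure with bottom `a` and
top `b`. The proof `h` is a parameter of the type so that instances can use it. -/
@[ext]
structure Interval (h : IsMedianAlgebra m) (a b : X) where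
  /-- The underlying point. -/
  val : X
  mem : val ∈ mInterval m a b

namespace Interval

variable {h : IsMedianAlgebra m} {a b : X}

/-- The gate projection of a point to the interval between `a` and `b`. -/
def proj (h : IsMedianAlgebra m) (a b x : X) : h.Interval a b := ⟨m a b x, h.med_idem a b x⟩

instance : Max (h.Interval a b) :=
  ⟨fun x y => ⟨m b x.val y.val, h.med_mem_interval (h.med_self_right a b) x.mem y.mem⟩⟩

instance : Min (h.Interval a b) :=
  ⟨fun x y => ⟨m a x.val y.val, h.med_mem_interval (h.med_self_outer a b) x.mem y.mem⟩⟩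

lemma val_sup (x y : h.Interval a b) : (x ⊔ y).val = m b x.val y.val := rfl

lemma val_inf (x y : h.Interval a b) : (x ⊓ y).val = m a x.val y.val := rfl

instance : Lattice (h.Interval a b) :=
  Lattice.mk' (fun _ _ => Interval.ext (h.swap_right _ _ _))
    (fun _ _ _ => Interval.ext (h.med_assoc _ _ _ _))
    (fun _ _ => Interval.ext (h.swap_right _ _ _))
    (fun _ _ _ => Interval.ext (h.med_assoc _ _ _ _))
    (fun x y => Interval.ext <| by
      rw [val_sup, val_inf, h.med_med, h.med_self_right, h.swap_right b, h.swap_left b, x.mem,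
        h.med_self_left])
    (fun x y => Interval.ext <| by
      rw [val_inf, val_sup, h.med_med, h.med_self_right, h.swap_right a, x.mem, h.med_self_left])

instance : DistribLattice (h.Interval a b) :=
  DistribLattice.ofInfSupLe fun x y z => by
    have distrib : x ⊓ (y ⊔ z) = x ⊓ (x ⊓ y ⊔ x ⊓ z) := Interval.ext <| by
      simp only [val_inf, val_sup, h.med_distrib a x.val b, h.med_idem]
    exact distrib.trans_le inf_le_right

instance : OrderBot (h.Interval a b) where
  bot := ⟨a, h.med_self_outer a b⟩
  bot_le x := inf_eq_left.1 (Interval.ext (h.med_self_left a x.val))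

/-- The ambient median, restricted to an interval. -/
def med (x y z : h.Interval a b) : h.Interval a b :=
  ⟨m x.val y.val z.val, h.med_mem_interval x.mem y.mem z.mem⟩

lemma inf_med (t x y z : h.Interval a b) : t ⊓ med x y z = med (t ⊓ x) (t ⊓ y) (t ⊓ z) :=
  Interval.ext (h.med_distrib a t.val x.val y.val z.val)

lemma sup_med (t x y z : h.Interval a b) : t ⊔ med x y z = med (t ⊔ x) (t ⊔ y) (t ⊔ z) :=
  Interval.ext (h.med_distrib b t.val x.val y.val z.val)

lemma med_rotate (x y z : h.Interval a b) : med x y z = med y z x :=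
  Interval.ext (h.rotate _ _ _)

lemma inf_le_med (x y z : h.Interval a b) : x ⊓ y ≤ med x y z := by
  rw [← inf_eq_left, inf_med, inf_eq_left.2 (inf_le_left : x ⊓ y ≤ x),
    inf_eq_left.2 (inf_le_right : x ⊓ y ≤ y)]
  exact Interval.ext (h.med_self_left _ _)

lemma med_le_sup (x y z : h.Interval a b) : med x y z ≤ x ⊔ y := by
  rw [← sup_eq_left, sup_med, sup_eq_left.2 (le_sup_left : x ≤ x ⊔ y),
    sup_eq_left.2 (le_sup_right : y ≤ x ⊔ y)]
  exact Interval.ext (h.med_self_left _ _)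

lemma latticeMedian_eq_med (x y z : h.Interval a b) : latticeMedian x y z = med x y z := by
  apply le_antisymm
  · refine sup_le (sup_le (inf_le_med x y z) ?_) ?_
    · exact (inf_le_med y z x).trans_eq (med_rotate x y z).symm
    · rw [inf_comm]
      exact (inf_le_med z x y).trans_eq (med_rotate z x y)
  · refine (le_inf (le_inf (med_le_sup x y z) ?_) ?_).trans (inf_sup_le_latticeMedian x y z)
    · exact (med_rotate x y z).trans_le (med_le_sup y z x)
    · rw [sup_comm]
      exact (med_rotate z x y).symm.trans_le (med_le_sup z x y)

lemma isCubeHom_latticeHom {n : ℕ} (φ : LatticeHom (Fin n → Bool) (h.Interval a b)) :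
    IsCubeHom m fun x => (φ x).val := fun x y z => by
  simp only [bmed_eq_latticeMedian, map_latticeMedian, latticeMedian_eq_med, med]

lemma val_pairwiseOverlap_mem {ι : Type*} [Fintype ι] {C : Set X}
    (hC : MConvex m C) (ha : a ∈ C) {w : ι → h.Interval a b}
    (hw : ∀ i j, i ≠ j → (w i ⊓ w j).val ∈ C) : (pairwiseOverlap w).val ∈ C := by
  refine Finset.sup_induction (p := fun x : h.Interval a b => x.val ∈ C) ha
    (fun x hx y hy => ?_) fun p hp => hw p.1 p.2 (by simpa using hp)
  rw [val_sup, h.rotate]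
  exact h.med_mem_of_mem hC hx hy b

end Interval

end IsMedianAlgebra

section ContinuousMedian

variable {X Y : Type*} [TopologicalSpace X] [TopologicalSpace Y] {m : X → X → X → X}

/-- The pointwise median of continuous maps into a topological median algebra. -/
def pointwiseMedian (hcont : Continuous fun p : X × X × X => m p.1 p.2.1 p.2.2)
    (f g k : C(Y, X)) : C(Y, X) :=
  ⟨fun y => m (f y) (g y) (k y),
    hcont.comp (f.continuous.prodMk (g.continuous.prodMk k.continuous))⟩

lemma IsMedianAlgebra.pointwiseMedian (h : IsMedianAlgebra m)
    (hcont : Continuous fun p : X × X × X => m p.1 p.2.1 p.2.2) :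
    IsMedianAlgebra (pointwiseMedian hcont : C(Y, X) → C(Y, X) → C(Y, X) → C(Y, X)) :=
  ⟨fun _ _ _ => ContinuousMap.ext fun _ => h.swap_left _ _ _,
    fun _ _ _ => ContinuousMap.ext fun _ => h.rotate _ _ _,
    fun _ _ => ContinuousMap.ext fun _ => h.med_self_left _ _,
    fun _ _ _ _ _ => ContinuousMap.ext fun _ => h.med_med _ _ _ _ _⟩

variable {hcont : Continuous fun p : X × X × X => m p.1 p.2.1 p.2.2}

lemma IsCubeHom.eval {n : ℕ} {F : (Fin n → Bool) → C(Y, X)}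
    (hF : IsCubeHom (pointwiseMedian hcont) F) (y : Y) : IsCubeHom m fun v => F v y :=
  fun u v w => DFunLike.congr_fun (hF u v w) y

lemma MConvex.preimage_eval {C : Set X} (hC : MConvex m C) (y : Y) :
    MConvex (pointwiseMedian hcont) {g : C(Y, X) | g y ∈ C} :=
  fun _ hf _ hg _ hk => hC _ hf _ hg (DFunLike.congr_fun hk y)

lemma MConvex.closure (h : IsMedianAlgebra m)
    (hcont : Continuous fun p : X × X × X => m p.1 p.2.1 p.2.2) {C : Set X} (hC : MConvex m C) :
    MConvex m (closure C) := fun a ha b hb c hc => by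
  have hcont_left : Continuous (Function.uncurry fun x y => m x y c) :=
    hcont.comp (continuous_fst.prodMk (continuous_snd.prodMk continuous_const))
  rw [← show m a b c = c from hc]
  exact map_mem_closure₂ (f := fun x y => m x y c) hcont_left ha hb
    fun x hx y hy => h.med_mem_of_mem hC hx hy c

end ContinuousMedian

section Boundary

variable {X : Type*} [TopologicalSpace X] [T2Space X] {m : X → X → X → X}
  {Hp Hm : Set X}

open IsMedianAlgebra.Interval

lemma exists_cube_of_disjoint_in_limit {Y : Type*} [TopologicalSpace Y] (h : IsMedianAlgebra m)
    {hcont : Continuous fun p : X × X × X => m p.1 p.2.1 p.2.2}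
    (hP : MConvex m Hp) (hM : MConvex m Hm) (hdisj : Disjoint Hp Hm)
    {D : Set Y} {y₀ : Y} (hy₀ : y₀ ∈ closure D) {a b : C(Y, X)}
    (ha : ∀ y ∈ D, a y ∈ Hm) (hb : ∀ y ∈ D, b y ∈ Hp) {n : ℕ}
    {w : Fin (n + 1) → (h.pointwiseMedian hcont).Interval a b}
    (hw_zero : ∀ y ∈ D, (w 0).val y ∈ Hp) (hw_succ : ∀ y ∈ D, ∀ i : Fin n, (w i.succ).val y ∈ Hm)
    (hlim_disj : ∀ i j, i ≠ j → (w i ⊓ w j).val y₀ = a y₀)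
    (hlim_ne : ∀ i : Fin n, (w i.succ).val y₀ ≠ a y₀) :
    ∃ F : (Fin (n + 1) → Bool) → X, Function.Injective F ∧ IsCubeHom m F := by
  let c := (pairwiseOverlap w).val
  let E (i : Fin (n + 1)) := (pairwiseOverlap w ⊔ w i).val
  have c_limit : c y₀ = a y₀ :=
    val_pairwiseOverlap_mem ((h.mConvex_singleton (a y₀)).preimage_eval y₀) rfl hlim_disj
  have c_mem : ∀ y ∈ D, c y ∈ Hm := fun y hy => by
    refine val_pairwiseOverlap_mem (hM.preimage_eval y) (ha y hy) fun i j hij => ?_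
    change m (a y) ((w i).val y) ((w j).val y) ∈ Hm
    cases i using Fin.cases with
    | succ i => exact h.med_mem_of_mem hM (ha y hy) (hw_succ y hy i) _
    | zero =>
      obtain ⟨j, rfl⟩ := Fin.exists_succ_eq.2 hij.symm
      exact h.med_mem_of_mem_outer hM (ha y hy) (hw_succ y hy j) _
  have E_zero_mem : ∀ y ∈ D, E 0 y ∈ Hp := fun y hy =>
    h.med_mem_of_mem_outer hP (hb y hy) (hw_zero y hy) (c y)
  have E_succ_limit (i : Fin n) : E i.succ y₀ = (w i.succ).val y₀ := by
    change m (b y₀) (c y₀) ((w i.succ).val y₀) = (w i.succ).val y₀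
    rw [c_limit, h.swap_left]
    exact DFunLike.congr_fun (w i.succ).mem y₀
  obtain ⟨y, hne, hy⟩ : ∃ y, (∀ i : Fin n, E i.succ y ≠ c y) ∧ y ∈ D := by
    refine mem_closure_iff.1 hy₀ {y | ∀ i : Fin n, E i.succ y ≠ c y} ?_ fun i => ?_
    · simp only [Set.ofPred_forall]
      exact isOpen_iInter_of_finite fun i => isOpen_ne_fun (E i.succ).continuous c.continuous
    · rw [E_succ_limit, c_limit]
      exact hlim_ne i
  have hF := (isCubeHom_latticeHom (overlapCube w)).eval y
  refine ⟨_, hF.injective fun i => ?_, hF⟩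
  simp only [overlapCube_atom, overlapCube_bot]
  cases i using Fin.cases with
  | zero => exact hdisj.ne_of_mem (E_zero_mem y hy) (c_mem y hy)
  | succ i => exact hne i

lemma exists_cube_succ_of_boundary_cube (h : IsMedianAlgebra m)
    (hcont : Continuous fun p : X × X × X => m p.1 p.2.1 p.2.2)
    (hP : MConvex m Hp) (hM : MConvex m Hm) (hdisj : Disjoint Hp Hm) {n : ℕ}
    {f : (Fin n → Bool) → X} (hinj : Function.Injective f) (hf : IsCubeHom m f)
    (hrange : Set.range f ⊆ closure Hp ∩ closure Hm) :
    ∃ F : (Fin (n + 1) → Bool) → X, Function.Injective F ∧ IsCubeHom m F := by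
  let D : Set ((Fin n → Bool) → X × X) := Set.univ.pi fun _ => Hp ×ˢ Hm
  let y₀ : (Fin n → Bool) → X × X := fun v => (f v, f v)
  have hy₀ : y₀ ∈ closure D := by
    simp only [D, closure_pi_set, closure_prod_eq]
    exact fun v _ => hrange ⟨v, rfl⟩
  let p (v : Fin n → Bool) : C((Fin n → Bool) → X × X, X) := ⟨fun y => (y v).1, by fun_prop⟩
  let q (v : Fin n → Bool) : C((Fin n → Bool) → X × X, X) := ⟨fun y => (y v).2, by fun_prop⟩
  have hp : ∀ y ∈ D, ∀ v, p v y ∈ Hp := fun y hy v => (hy v trivial).1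
  have hq : ∀ y ∈ D, ∀ v, q v y ∈ Hm := fun y hy v => (hy v trivial).2
  let A := h.pointwiseMedian hcont (Y := (Fin n → Bool) → X × X)
  let w : Fin (n + 1) → A.Interval (q ⊥) (p ⊤) :=
    Fin.cons (proj A _ _ (p ⊥)) fun i => proj A _ _ (q (cubeAtom i))
  let v : Fin (n + 1) → Fin n → Bool := Fin.cons ⊥ cubeAtom
  have w_limit : ∀ i, (w i).val y₀ = f (v i) := by
    have proj_limit (x : Fin n → Bool) : m (f ⊥) (f ⊤) (f x) = f x := by rw [← hf, bmed_bot_top]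
    exact Fin.cases (proj_limit ⊥) fun i => proj_limit (cubeAtom i)
  refine exists_cube_of_disjoint_in_limit h hP hM hdisj hy₀ (w := w) (fun y hy => hq y hy ⊥)
    (fun y hy => hp y hy ⊤) (fun y hy => ?_) (fun y hy i => ?_) (fun i j hij => ?_) fun i => ?_
  · change m (q ⊥ y) (p ⊤ y) (p ⊥ y) ∈ Hp
    rw [h.rotate]
    exact h.med_mem_of_mem hP (hp y hy ⊤) (hp y hy ⊥) _
  · exact h.med_mem_of_mem_outer hM (hq y hy ⊥) (hq y hy (cubeAtom i)) (p ⊤ y)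
  · change m (f ⊥) ((w i).val y₀) ((w j).val y₀) = f ⊥
    rw [w_limit, w_limit, ← hf, bmed_bot_eq_inf, (pairwise_disjoint_cons_bot_cubeAtom hij).eq_bot]
  · rw [w_limit]
    exact hinj.ne (cubeAtom_ne_bot i)

end Boundary

theorem wall_boundary_convex_subalgebra_rank_general {X : Type*} [TopologicalSpace X] [T2Space X]
    (m : X → X → X → X) (hmed : IsMedianAlgebra m)
    (hcont : Continuous fun p : X × X × X => m p.1 p.2.1 p.2.2)
    (Hp Hm : Set X) (hP : MConvex m Hp) (hM : MConvex m Hm) (hdisj : Disjoint Hp Hm) :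
    MConvex m (closure Hp ∩ closure Hm) ∧
    (∀ x ∈ closure Hp ∩ closure Hm, ∀ y ∈ closure Hp ∩ closure Hm,
      ∀ z ∈ closure Hp ∩ closure Hm, m x y z ∈ closure Hp ∩ closure Hm) ∧
    (∀ r : ℕ,
      (∀ n : ℕ, ∀ f : (Fin n → Bool) → X, Function.Injective f →
        (∀ x y z, f (bmed x y z) = m (f x) (f y) (f z)) → n ≤ r) →
      ∀ n : ℕ, ∀ f : (Fin n → Bool) → X, Function.Injective f →
        (∀ x y z, f (bmed x y z) = m (f x) (f y) (f z)) →
        Set.range f ⊆ closure Hp ∩ closure Hm → (n : ℤ) ≤ (r : ℤ) - 1) := by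
  have hconvex : MConvex m (closure Hp ∩ closure Hm) :=
    (hP.closure hmed hcont).inter (hM.closure hmed hcont)
  refine ⟨hconvex, fun x hx y hy z _ => hmed.med_mem_of_mem hconvex hx hy z, ?_⟩
  intro r hrank n f hinj hf hrange
  obtain ⟨F, hFinj, hF⟩ := exists_cube_succ_of_boundary_cube hmed hcont hP hM hdisj hinj hf hrange
  have succ_le : n + 1 ≤ r := hrank (n + 1) F hFinj hF
  omega

/-- For a wall `W` in a metric space with a continuous locally convex median, the subset
`L(W)` is a convex median subalgebra, of rank at most `r - 1` if the median has rank `≤ r`. -/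
theorem wall_boundary_convex_subalgebra_rank {X : Type*} [MetricSpace X]
    (m : X → X → X → X) (hmed : IsMedianAlgebra m)
    (hcont : Continuous fun p : X × X × X => m p.1 p.2.1 p.2.2)
    (hlc : ∀ x : X, ∀ U ∈ nhds x, ∃ V ∈ nhds x, V ⊆ U ∧ MConvex m V)
    (Hp Hm : Set X) (hW : IsWall m Hp Hm) :
    MConvex m (closure Hp ∩ closure Hm) ∧
    (∀ x ∈ closure Hp ∩ closure Hm, ∀ y ∈ closure Hp ∩ closure Hm,
      ∀ z ∈ closure Hp ∩ closure Hm, m x y z ∈ closure Hp ∩ closure Hm) ∧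
    (∀ r : ℕ,
      (∀ n : ℕ, ∀ f : (Fin n → Bool) → X, Function.Injective f →
        (∀ x y z, f (bmed x y z) = m (f x) (f y) (f z)) → n ≤ r) →
      ∀ n : ℕ, ∀ f : (Fin n → Bool) → X, Function.Injective f →
        (∀ x y z, f (bmed x y z) = m (f x) (f y) (f z)) →
        Set.range f ⊆ closure Hp ∩ closure Hm → (n : ℤ) ≤ (r : ℤ) - 1) := by
  obtain ⟨-, -, hP, hM, hdisj, -⟩ := hW
  exact wall_boundary_convex_subalgebra_rank_general m hmed hcont Hp Hm hP hM hdisj
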